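/- Let d ≥ 4. A form F ∈ ℝ[x,y]_d realizes the maximal possible gap d - 2 between its real Waring rank and its complex Waring rank if and only if rk(F) = 2 and rk_ℝ(F) = d; equivalently, F has complex Waring rank two and splits into d distinct real linear factors. -/

import Mathlib

open MvPolynomial

noncomputable def lin (c : ℂ × ℂ) : MvPolynomial (Fin 2) ℂ :=
  C c.1 * X 0 + C c.2 * X 1

noncomputable def waringRank (d : ℕ) (F : MvPolynomial (Fin 2) ℂ) : ℕ :=
  sInf {r | ∃ (a : Fin r → ℂ) (c : Fin r → ℂ × ℂ), F = ∑ i, C (a i) * lin (c i) ^ d}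

noncomputable def rlin (c : ℝ × ℝ) : MvPolynomial (Fin 2) ℝ :=
  C c.1 * X 0 + C c.2 * X 1

noncomputable def realWaringRank (d : ℕ) (F : MvPolynomial (Fin 2) ℝ) : ℕ :=
  sInf {r | ∃ (a : Fin r → ℝ) (c : Fin r → ℝ × ℝ), F = ∑ i, C (a i) * rlin (c i) ^ d}

theorem functional {ι : Type*} [Fintype ι] (c : ι → ℂ × ℂ) (q : ℕ → ℂ × ℂ) (n : ℕ) :
    ∀ a : ι → ℂ, ∑ i, C (a i) * lin (c i) ^ n = 0 →
    ∑ i, a i * ∏ j ∈ Finset.range n, ((q j).1 * (c i).1 + (q j).2 * (c i).2) = 0 := by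
  induction n with
  | zero =>
    intro a h
    have := congrArg (coeff 0) h
    simpa [coeff_sum] using this
  | succ n ih =>
    intro a h
    have h2 := congrArg (fun P => C (q n).1 * pderiv 0 P + C (q n).2 * pderiv 1 P) h
    simp only [map_sum, map_zero, mul_zero, add_zero, Finset.mul_sum, ← Finset.sum_add_distrib] at h2
    have h3 : C ((n:ℂ)+1) * ∑ i, C (a i * ((q n).1 * (c i).1 + (q n).2 * (c i).2)) * lin (c i) ^ n
        = 0 := by
      rw [← h2, Finset.mul_sum]
      refine Finset.sum_congr rfl fun i _ => ?_
      simp [lin, Derivation.leibniz_pow, pderiv_X]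
      ring
    have h4 := (mul_eq_zero.1 h3).resolve_left (by
      intro h0; rw [C_eq_zero] at h0; revert h0; exact Nat.cast_add_one_ne_zero n)
    have := ih _ h4
    rw [← this]
    refine Finset.sum_congr rfl fun i _ => ?_
    rw [Finset.prod_range_succ]; ring

theorem kill {ι : Type*} [Fintype ι] (c : ι → ℂ × ℂ) (q : ℕ → ℂ × ℂ) (n : ℕ)
    (a : ι → ℂ) (h : ∑ i, C (a i) * lin (c i) ^ n = 0) (i0 : ι)
    (h1 : ∀ i, i ≠ i0 → ∃ j, j < n ∧ (q j).1 * (c i).1 + (q j).2 * (c i).2 = 0)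
    (h2 : ∀ j, j < n → (q j).1 * (c i0).1 + (q j).2 * (c i0).2 ≠ 0) : a i0 = 0 := by
  have := functional c q n a h
  rw [Finset.sum_eq_single i0] at this
  · refine (mul_eq_zero.1 this).resolve_right ?_
    apply Finset.prod_ne_zero_iff.2
    intro j hj; exact h2 j (by simpa using hj)
  · intro i _ hi
    obtain ⟨j, hj, hz⟩ := h1 i hi
    rw [Finset.prod_eq_zero (i := j) (by simpa using hj) hz, mul_zero]
  · simp

noncomputable def cj (p : ℂ × ℂ) : ℂ × ℂ := (starRingEnd ℂ p.1, starRingEnd ℂ p.2)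

theorem map_rlin (c : ℝ × ℝ) : (rlin c).map (algebraMap ℝ ℂ) = lin ((c.1 : ℂ), (c.2 : ℂ)) := by
  simp [rlin, lin]

theorem map_lin_conj (c : ℂ × ℂ) : (lin c).map (starRingEnd ℂ) = lin (cj c) := by
  simp [lin, cj]

theorem map_conj_map (F : MvPolynomial (Fin 2) ℝ) :
    (F.map (algebraMap ℝ ℂ)).map (starRingEnd ℂ) = F.map (algebraMap ℝ ℂ) := by
  rw [MvPolynomial.map_map]
  have : (starRingEnd ℂ).comp (algebraMap ℝ ℂ) = algebraMap ℝ ℂ := by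
    ext x; simp
  rw [this]

theorem map_inj {F G : MvPolynomial (Fin 2) ℝ}
    (h : F.map (algebraMap ℝ ℂ) = G.map (algebraMap ℝ ℂ)) : F = G :=
  MvPolynomial.map_injective _ (algebraMap ℝ ℂ).injective h

theorem lin_smul (t : ℂ) (p : ℂ × ℂ) : lin (t * p.1, t * p.2) = C t * lin p := by
  simp [lin]; ring

theorem real_of_par (l : ℂ × ℂ) (h : l.1 * (cj l).2 = l.2 * (cj l).1) :
    ∃ (t : ℂ) (m : ℝ × ℝ), lin l = C t * lin ((m.1 : ℂ), (m.2 : ℂ)) := by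
  by_cases h1 : l.1 = 0
  · refine ⟨l.2, (0, 1), ?_⟩
    simp [lin, h1]
  · have h1' : (starRingEnd ℂ) l.1 ≠ 0 := by simpa using h1
    have : starRingEnd ℂ (l.2 / l.1) = l.2 / l.1 := by
      simp only [cj] at h
      rw [map_div₀]; field_simp; linear_combination h
    obtain ⟨r, hr⟩ := Complex.conj_eq_iff_real.1 this
    refine ⟨l.1, (1, r), ?_⟩
    have h2 : l.2 = l.1 * r := by rw [← hr]; field_simp
    rw [← lin_smul]; simp [← h2]

theorem caseB (d : ℕ) (F : MvPolynomial (Fin 2) ℝ) (a b : ℂ) (l k : ℂ × ℂ)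
    (h : F.map (algebraMap ℝ ℂ) = C a * lin l ^ d + C b * lin k ^ d)
    (hl : l.1 * (cj l).2 = l.2 * (cj l).1) (hk : k.1 * (cj k).2 = k.2 * (cj k).1) :
    ∃ (A B : ℝ) (m n : ℝ × ℝ), F = C A * rlin m ^ d + C B * rlin n ^ d := by
  obtain ⟨t, m, hm⟩ := real_of_par l hl
  obtain ⟨s, n, hn⟩ := real_of_par k hk
  refine ⟨(a * t ^ d).re, (b * s ^ d).re, m, n, map_inj ?_⟩
  have h2 := congrArg (MvPolynomial.map (starRingEnd ℂ)) h
  rw [map_conj_map, hm, hn] at h2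
  rw [hm, hn] at h
  simp only [map_add, map_mul, map_pow, map_C, map_lin_conj, map_rlin] at h2 ⊢
  have e : ∀ z : ℂ, C (σ := Fin 2) ((algebraMap ℝ ℂ) z.re) * 2 = C z + C (starRingEnd ℂ z) := by
    intro z
    rw [← C_add, Complex.add_conj, show (2 : MvPolynomial (Fin 2) ℂ) = C 2 from (map_ofNat C 2).symm, ← C_mul]
    simp [mul_comm]
  have h20 : (2 : MvPolynomial (Fin 2) ℂ) ≠ 0 := two_ne_zero
  apply mul_left_cancel₀ h20
  have e1 := e (a * t ^ d)
  have e2 := e (b * s ^ d)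
  simp only [cj, Complex.conj_ofReal] at h2
  simp only [map_mul, map_pow] at e1 e2
  linear_combination h + h2 - (lin (↑m.1, ↑m.2)) ^ d * e1 - (lin (↑n.1, ↑n.2)) ^ d * e2

theorem par_dichotomy (d : ℕ) (hd : 4 ≤ d) (F : MvPolynomial (Fin 2) ℝ) (a b : ℂ) (l k : ℂ × ℂ)
    (h : F.map (algebraMap ℝ ℂ) = C a * lin l ^ d + C b * lin k ^ d) (ha : a ≠ 0)
    (hlk : l.1 * k.2 ≠ l.2 * k.1) :
    l.1 * (cj l).2 = l.2 * (cj l).1 ∨ l.1 * (cj k).2 = l.2 * (cj k).1 := by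
  by_contra! hc
  obtain ⟨h1, h2⟩ := hc
  have hh := congrArg (MvPolynomial.map (starRingEnd ℂ)) h
  rw [map_conj_map] at hh
  simp only [map_add, map_mul, map_pow, map_C, map_lin_conj] at hh
  refine ha (kill (ι := Fin 4) ![l, k, cj l, cj k]
    (fun j => if j = 0 then (k.2, -k.1) else if j = 1 then ((cj l).2, -(cj l).1)
      else ((cj k).2, -(cj k).1)) d ![a, b, -starRingEnd ℂ a, - starRingEnd ℂ b] (by
      simp [Fin.sum_univ_four]
      linear_combination hh - h) 0 ?_ ?_)
  · intro i hi
    fin_cases i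
    · simp at hi
    · exact ⟨0, by omega, by simp; ring⟩
    · exact ⟨1, by omega, by simp; ring⟩
    · exact ⟨2, by omega, by simp; ring⟩
  · intro j hj
    simp only [Matrix.cons_val_zero]
    split_ifs
    · intro h0; apply hlk; linear_combination h0
    · intro h0; apply h1; linear_combination h0
    · intro h0; apply h2; linear_combination h0

theorem hom_expand (d : ℕ) (F : MvPolynomial (Fin 2) ℝ) (hF : F.IsHomogeneous d) :
    ∃ f : ℕ → ℝ, F = ∑ k ∈ Finset.range (d + 1), C (f k) * (X 0 ^ k * X 1 ^ (d - k)) := by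
  let e : ℕ → (Fin 2 →₀ ℕ) := fun k => Finsupp.single 0 k + Finsupp.single 1 (d - k)
  refine ⟨fun k => coeff (e k) F, ?_⟩
  have hm : ∀ k, C (coeff (e k) F) * (X 0 ^ k * X 1 ^ (d - k)) = monomial (e k) (coeff (e k) F) := by
    intro k
    rw [X_pow_eq_monomial, X_pow_eq_monomial, monomial_mul, C_mul_monomial]
    simp [e]
  simp only [hm]
  ext m
  rw [coeff_sum]
  simp only [coeff_monomial]
  by_cases h : m 0 + m 1 = d
  · have hme : e (m 0) = m := by
      ext i; fin_cases i
      · simp [e]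
      · simp [e]; omega
    rw [Finset.sum_eq_single (m 0)]
    · simp [hme]
    · intro b _ hb
      rw [if_neg]
      intro h2
      apply hb
      rw [← h2]; simp [e]
    · intro h2; simp at h2; omega
  · rw [hF.coeff_eq_zero]
    · symm
      apply Finset.sum_eq_zero
      intro k hk
      rw [if_neg]
      intro h2
      apply h
      rw [← h2]; simp at hk; simp [e]; omega
    · intro h2; apply h; rw [← h2, Finsupp.degree_eq_sum]; simp

theorem poly_of_coef (d : ℕ) {ι : Type*} [Fintype ι] (a : ι → ℝ) (c : ι → ℝ × ℝ) (g : ℕ → ℝ)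
    (h : ∀ k ≤ d, ∑ i, a i * ((c i).1 ^ k * (c i).2 ^ (d - k)) = g k) :
    ∑ i, C (a i) * rlin (c i) ^ d =
      ∑ k ∈ Finset.range (d + 1), C (g k * d.choose k) * (X 0 ^ k * X 1 ^ (d - k)) := by
  simp only [rlin, add_pow, Finset.mul_sum]
  rw [Finset.sum_comm]
  refine Finset.sum_congr rfl fun k hk => ?_
  rw [← h k (by simp at hk; omega), Finset.sum_mul, map_sum, Finset.sum_mul]
  refine Finset.sum_congr rfl fun i _ => ?_
  simp only [map_mul, map_pow, mul_pow, map_natCast]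
  ring

noncomputable def Rrow (d : ℕ) (θ : ℝ) : Fin (d + 1) → ℝ :=
  fun k => Real.cos θ ^ (k : ℕ) * Real.sin θ ^ (d - (k : ℕ))

theorem Rrow_add_pi (d : ℕ) (θ : ℝ) (k : Fin (d + 1)) :
    Rrow d (θ + Real.pi) k = (-1) ^ d * Rrow d θ k := by
  have hk : (k : ℕ) + (d - k) = d := by omega
  simp only [Rrow, Real.cos_add_pi, Real.sin_add_pi]
  rw [neg_pow, neg_pow (Real.sin θ)]
  have h2 : (-1 : ℝ) ^ d = (-1) ^ (k : ℕ) * (-1) ^ (d - (k : ℕ)) := by rw [← pow_add, hk]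
  rw [h2]; ring

noncomputable def MM (n : ℕ) (g : Fin (n + 2) → ℝ) (t : ℝ) : Matrix (Fin (n + 2)) (Fin (n + 2)) ℝ :=
  Matrix.of (Fin.cons g (fun i : Fin (n + 1) => Rrow (n + 1) (t + (i : ℕ) * (Real.pi / (n + 1)))))

theorem det_shift (n : ℕ) (g : Fin (n + 2) → ℝ) :
    (MM n g (Real.pi / (n + 1))).det = - (MM n g 0).det := by
  let σ : Equiv.Perm (Fin (n + 2)) := Equiv.Perm.decomposeFin.symm (0, finRotate (n + 1))
  let v : Fin (n + 2) → ℝ := Fin.cons 1 (fun i => if i = Fin.last n then (-1) ^ (n + 1) else 1)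
  have h : MM n g (Real.pi / (n + 1)) =
      Matrix.of fun i j => v i * (MM n g 0).submatrix σ id i j := by
    ext i j
    refine Fin.cases ?_ (fun i => ?_) i
    · simp [MM, σ, v]
    · simp only [MM, σ, v, Matrix.of_apply, Fin.cons_succ, Matrix.submatrix_apply, id,
        Equiv.Perm.decomposeFin_symm_apply_succ, Equiv.swap_self, Equiv.refl_apply]
      by_cases hi : i = Fin.last n
      · subst hi
        rw [if_pos rfl, finRotate_last, ← Rrow_add_pi]
        congr 1
        simp; field_simp; ring
      · rw [if_neg hi, one_mul]
        congr 1
        rw [coe_finRotate_of_ne_last hi]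
        push_cast; ring
  rw [h, Matrix.det_mul_column, Matrix.det_permute, Equiv.Perm.decomposeFin.symm_sign,
    sign_finRotate, Fin.prod_univ_succ]
  simp only [v, Fin.cons_zero, Fin.cons_succ]
  rw [Finset.prod_ite_eq']
  have : ((-1 : ℝ) ^ n) * (-1) ^ n = 1 := by rw [← mul_pow]; simp
  simp [pow_succ]
  rw [← mul_assoc, this, one_mul]

theorem exists_det_zero (n : ℕ) (g : Fin (n + 2) → ℝ) : ∃ t, (MM n g t).det = 0 := by
  have hc : Continuous fun t => (MM n g t).det := by
    apply Continuous.matrix_det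
    refine continuous_matrix fun i j => ?_
    refine Fin.cases ?_ (fun i => ?_) i
    · simp only [MM, Matrix.of_apply, Fin.cons_zero]; exact continuous_const
    · simp only [MM, Matrix.of_apply, Fin.cons_succ, Rrow]; fun_prop
  have hs := det_shift n g
  rcases le_total (MM n g 0).det 0 with h | h
  · exact mem_range_of_exists_le_of_exists_ge hc ⟨0, h⟩ ⟨Real.pi / (n + 1), by simp only [hs]; linarith⟩
  · exact mem_range_of_exists_le_of_exists_ge hc ⟨Real.pi / (n + 1), by simp only [hs]; linarith⟩ ⟨0, h⟩

theorem angles_indep (n : ℕ) (t : ℝ) (w : Fin (n + 1) → ℝ)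
    (h : ∀ k : Fin (n + 2), ∑ i, w i * Rrow (n + 1) (t + (i : ℕ) * (Real.pi / (n + 1))) k = 0) :
    w = 0 := by
  let θ : ℕ → ℝ := fun i => t + i * (Real.pi / (n + 1))
  have h1 := poly_of_coef (n + 1) w (fun i => (Real.cos (θ i), Real.sin (θ i))) (fun _ => 0) (by
    intro k hk
    exact h ⟨k, by omega⟩)
  simp only [zero_mul, map_zero, Finset.sum_const_zero] at h1
  have h2 := congrArg (MvPolynomial.map (algebraMap ℝ ℂ)) h1
  simp only [map_sum, map_mul, map_pow, map_C, map_rlin, map_zero] at h2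
  ext i
  have := kill (fun i : Fin (n + 1) => ((Real.cos (θ i) : ℂ), (Real.sin (θ i) : ℂ)))
    (fun j => if j = i then ((Real.cos (θ i) : ℂ), (Real.sin (θ i) : ℂ)) else
      ((Real.sin (θ j) : ℂ), -(Real.cos (θ j) : ℂ))) (n + 1) (fun i => ((w i : ℝ) : ℂ)) h2 i ?_ ?_
  · simpa using this
  · intro j hj
    refine ⟨j, j.2, ?_⟩
    rw [if_neg (by intro h; exact hj (Fin.ext h))]
    ring
  · intro j hj
    split_ifs with hji
    · simp only [← Complex.ofReal_mul, ← Complex.ofReal_add]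
      rw [← sq, ← sq, Real.cos_sq_add_sin_sq]; simp
    · simp only [← Complex.ofReal_mul, ← Complex.ofReal_add, ← Complex.ofReal_neg]
      rw [Ne, Complex.ofReal_eq_zero]
      have e : Real.sin (θ j) * Real.cos (θ i) + -Real.cos (θ j) * Real.sin (θ i)
        = Real.sin (θ j - θ i) := by rw [Real.sin_sub]; ring
      have e2 : θ j - θ i = ((j : ℝ) - (i : ℕ)) * (Real.pi / (n + 1)) := by simp only [θ]; ring
      have hp : (0 : ℝ) < Real.pi / (n + 1) := by positivity
      have hn : (0 : ℝ) < n + 1 := by positivity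
      have hpi : Real.pi = (n + 1) * (Real.pi / (n + 1)) := by field_simp
      have hj' : (j : ℝ) < n + 1 := by exact_mod_cast hj
      have hi' : ((i : ℕ) : ℝ) < n + 1 := by exact_mod_cast i.2
      have hj0 : (0 : ℝ) ≤ j := by positivity
      have hi0 : (0 : ℝ) ≤ (i : ℕ) := by positivity
      rw [e, Real.sin_eq_zero_iff_of_lt_of_lt, e2]
      · intro h0
        rcases mul_eq_zero.1 h0 with h0 | h0
        · apply hji; exact_mod_cast sub_eq_zero.1 h0
        · exact hp.ne' h0
      · rw [e2]; nth_rewrite 1 [hpi]; rw [← neg_mul]; gcongr; linarith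
      · rw [e2]; nth_rewrite 2 [hpi]; gcongr; linarith

theorem real_rank_le (n : ℕ) (F : MvPolynomial (Fin 2) ℝ) (hF : F.IsHomogeneous (n + 1)) :
    ∃ (a : Fin (n + 1) → ℝ) (c : Fin (n + 1) → ℝ × ℝ), F = ∑ i, C (a i) * rlin (c i) ^ (n + 1) := by
  obtain ⟨f, hf⟩ := hom_expand _ F hF
  let g : ℕ → ℝ := fun k => f k / (n + 1).choose k
  obtain ⟨t, ht⟩ := exists_det_zero n (fun k => g k)
  obtain ⟨w, hw0, hw⟩ := Matrix.exists_vecMul_eq_zero_iff.2 ht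
  have hk : ∀ k : Fin (n + 2), w 0 * g k +
      ∑ i : Fin (n + 1), w i.succ * Rrow (n + 1) (t + (i : ℕ) * (Real.pi / (n + 1))) k = 0 := by
    intro k
    have := congrFun hw k
    simpa [Matrix.vecMul, dotProduct, Fin.sum_univ_succ (n := n + 1), MM] using this
  have hw00 : w 0 ≠ 0 := by
    intro h0
    apply hw0
    have := angles_indep n t (fun i => w i.succ) (by simpa [h0] using hk)
    ext i
    refine Fin.cases h0 (fun i => ?_) i
    exact congrFun this i
  refine ⟨fun i => - w i.succ / w 0, fun i => (Real.cos (t + (i : ℕ) * (Real.pi / (n + 1))),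
    Real.sin (t + (i : ℕ) * (Real.pi / (n + 1)))), ?_⟩
  rw [poly_of_coef _ _ _ g, hf]
  · refine Finset.sum_congr rfl fun k hk => ?_
    have : ((n + 1).choose k : ℝ) ≠ 0 := by
      simp at hk
      exact_mod_cast (Nat.choose_pos (by omega)).ne'
    simp only [g]; rw [div_mul_cancel₀ _ this]
  · intro k hk'
    have := hk ⟨k, by omega⟩
    apply mul_left_cancel₀ hw00
    rw [eq_neg_of_add_eq_zero_left this, Finset.mul_sum, ← Finset.sum_neg_distrib]
    refine Finset.sum_congr rfl fun i _ => ?_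
    simp only [Rrow]
    field_simp

theorem exists_smul_of_par (l k : ℂ × ℂ) (hl : l ≠ 0) (h : l.1 * k.2 = l.2 * k.1) :
    ∃ s : ℂ, k = (s * l.1, s * l.2) := by
  by_cases h1 : l.1 = 0
  · have h2 : l.2 ≠ 0 := fun h2 => hl (Prod.ext h1 h2)
    refine ⟨k.2 / l.2, Prod.ext ?_ ?_⟩
    · rw [h1, zero_mul] at h
      rcases mul_eq_zero.1 h.symm with h3 | h3
      · exact absurd h3 h2
      · simp [h1, h3]
    · simp; field_simp
  · refine ⟨k.1 / l.1, Prod.ext ?_ ?_⟩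
    · simp; field_simp
    · simp; field_simp; linear_combination h

theorem par_merge (d : ℕ) (hd : d ≠ 0) (a b : ℂ) (l k : ℂ × ℂ) (h : l.1 * k.2 = l.2 * k.1) :
    ∃ t e, C a * lin l ^ d + C b * lin k ^ d = C t * lin e ^ d := by
  by_cases hl : l = 0
  · refine ⟨b, k, ?_⟩
    simp [hl, lin, hd]
  · obtain ⟨s, hs⟩ := exists_smul_of_par l k hl h
    refine ⟨a + b * s ^ d, l, ?_⟩
    rw [hs, lin_smul]
    simp only [map_add, map_mul, map_pow]
    ring

theorem cj_cj (p : ℂ × ℂ) : cj (cj p) = p := by simp [cj]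

theorem caseA (d : ℕ) (hd : d ≠ 0) (F : MvPolynomial (Fin 2) ℝ) (hF0 : F ≠ 0) (a b : ℂ)
    (l k : ℂ × ℂ)
    (h : F.map (algebraMap ℝ ℂ) = C a * lin l ^ d + C b * lin k ^ d)
    (hlk : l.1 * k.2 ≠ l.2 * k.1) (hA : l.1 * (cj k).2 = l.2 * (cj k).1) :
    ∃ p : ℂ × ℂ, p.1 * (cj p).2 ≠ p.2 * (cj p).1 ∧
      F.map (algebraMap ℝ ℂ) = lin p ^ d + lin (cj p) ^ d := by
  have hl : cj l ≠ 0 := by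
    intro h0
    have : l = 0 := by rw [← cj_cj l, h0]; simp [cj]
    apply hlk; simp [this]
  have hA' : (cj l).1 * k.2 = (cj l).2 * k.1 := by
    have := congrArg (starRingEnd ℂ) hA
    simpa [cj] using this
  obtain ⟨s, hs⟩ := exists_smul_of_par (cj l) k hl hA'
  have hnr : l.1 * (cj l).2 ≠ l.2 * (cj l).1 := by
    intro h0; apply hlk; rw [hs]; simp only; linear_combination s * h0
  rw [hs, lin_smul] at h
  have h2 := congrArg (MvPolynomial.map (starRingEnd ℂ)) h
  rw [map_conj_map] at h2
  simp only [map_add, map_mul, map_pow, map_C, map_lin_conj, cj_cj] at h2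
  obtain ⟨β, hβ⟩ := IsAlgClosed.exists_pow_nat_eq ((a + starRingEnd ℂ (b * s ^ d)) / 2)
    (Nat.pos_of_ne_zero hd)
  have hβ1 : 2 * C (σ := Fin 2) β ^ d = C a + C (starRingEnd ℂ b) * C (starRingEnd ℂ s) ^ d := by
    rw [← C_pow, hβ, show (2 : MvPolynomial (Fin 2) ℂ) = C 2 from (map_ofNat C 2).symm, ← C_pow, ← C_mul, ← C_mul,
      ← C_add]
    congr 1
    simp; ring
  have hβ2 : 2 * C (σ := Fin 2) (starRingEnd ℂ β) ^ d = C (starRingEnd ℂ a) + C b * C s ^ d := by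
    have := congrArg (MvPolynomial.map (starRingEnd ℂ)) hβ1
    simpa using this
  have hm : F.map (algebraMap ℝ ℂ) = C β ^ d * lin l ^ d
      + C (starRingEnd ℂ β) ^ d * lin (cj l) ^ d := by
    have h20 : (2 : MvPolynomial (Fin 2) ℂ) ≠ 0 := two_ne_zero
    apply mul_left_cancel₀ h20
    linear_combination h + h2 - lin l ^ d * hβ1 - lin (cj l) ^ d * hβ2
  refine ⟨(β * l.1, β * l.2), ?_, ?_⟩
  · have hβ0 : β ≠ 0 := by
      intro h0
      apply hF0
      apply map_inj
      rw [hm, h0]; simp [hd]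
    have hβ0' : starRingEnd ℂ β ≠ 0 := by simpa using hβ0
    intro h0
    apply hnr
    simp only [cj, map_mul] at h0 ⊢
    apply mul_left_cancel₀ (mul_ne_zero hβ0 hβ0')
    linear_combination h0
  · have e : cj (β * l.1, β * l.2) = (starRingEnd ℂ β * (cj l).1, starRingEnd ℂ β * (cj l).2) := by
      simp [cj]
    rw [e, lin_smul, lin_smul, hm, mul_pow, mul_pow]

theorem lower_bound (d r : ℕ) (hd : d ≠ 0) (F : MvPolynomial (Fin 2) ℝ) (p : ℂ × ℂ)
    (hp : p.1 * (cj p).2 ≠ p.2 * (cj p).1)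
    (hF : F.map (algebraMap ℝ ℂ) = lin p ^ d + lin (cj p) ^ d)
    (a : Fin r → ℝ) (c : Fin r → ℝ × ℝ) (h : F = ∑ i, C (a i) * rlin (c i) ^ d) : d ≤ r := by
  by_contra! hr
  have h2 := congrArg (MvPolynomial.map (algebraMap ℝ ℂ)) h
  simp only [map_sum, map_mul, map_pow, map_C, map_rlin] at h2
  have := kill (ι := Fin r ⊕ Bool)
    (Sum.elim (fun i => (((c i).1 : ℂ), ((c i).2 : ℂ))) (fun b => if b then p else cj p))
    (fun j => if h : ∃ hj : j < r, c ⟨j, hj⟩ ≠ 0 then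
      (((c ⟨j, h.1⟩).2 : ℂ), -((c ⟨j, h.1⟩).1 : ℂ)) else ((cj p).2, -(cj p).1)) d
    (Sum.elim (fun i => -(a i : ℂ)) (fun _ => 1)) (by
      simp only [Fintype.sum_sum_type, Sum.elim_inl, Sum.elim_inr, Fintype.sum_bool, map_neg,
        neg_mul, Finset.sum_neg_distrib]
      simp only [if_true, Bool.false_eq_true, if_false, map_one, one_mul]
      rw [← hF, h2]
      simp) (Sum.inr true) ?_ ?_
  · simp at this
  · rintro (i | b) hi
    · refine ⟨i, by omega, ?_⟩
      by_cases hc : c i = 0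
      · simp [hc]
      · have : ∃ hj : (i : ℕ) < r, c ⟨i, hj⟩ ≠ 0 := ⟨i.2, hc⟩
        rw [dif_pos this]
        simp; ring
    · have hb : b = false := by
        cases b
        · rfl
        · simp at hi
      subst hb
      refine ⟨r, hr, ?_⟩
      rw [dif_neg (by rintro ⟨h, _⟩; omega)]
      simp; ring
  · intro j hj
    simp only [Sum.elim_inr, if_true]
    split_ifs with hc
    · obtain ⟨hjr, hc0⟩ := hc
      intro h0
      have h0' := congrArg (starRingEnd ℂ) h0
      simp only [map_add, map_mul, map_neg, Complex.conj_ofReal, map_zero] at h0'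
      apply hp
      simp only [cj]
      by_cases hu : (c ⟨j, hjr⟩).1 = 0
      · have hv : (c ⟨j, hjr⟩).2 ≠ 0 := fun hv => hc0 (Prod.ext hu hv)
        have hv' : ((c ⟨j, hjr⟩).2 : ℂ) ≠ 0 := by exact_mod_cast hv
        apply mul_left_cancel₀ hv'
        linear_combination (starRingEnd ℂ p.2) * h0 - p.2 * h0'
      · have hu' : ((c ⟨j, hjr⟩).1 : ℂ) ≠ 0 := by exact_mod_cast hu
        apply mul_left_cancel₀ hu'
        linear_combination (starRingEnd ℂ p.1) * h0 - p.1 * h0'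
    · intro h0; apply hp; linear_combination h0

theorem real_factor (p : ℂ × ℂ) (z : ℂ) (hz : ‖z‖ = 1) :
    ∃ (c : ℂ) (L : ℝ × ℝ), c ≠ 0 ∧ (L.1 : ℂ) = c * (p.1 - z * (cj p).1) ∧
      (L.2 : ℂ) = c * (p.2 - z * (cj p).2) := by
  obtain ⟨η, hη⟩ := IsAlgClosed.exists_pow_nat_eq z (n := 2) (by norm_num)
  have hn : ‖η‖ = 1 := by
    have : ‖η‖ ^ 2 = 1 := by rw [← norm_pow, hη, hz]
    exact (pow_eq_one_iff_of_nonneg (norm_nonneg _) (by norm_num)).1 this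
  have hη1 : η * starRingEnd ℂ η = 1 := by rw [Complex.mul_conj']; simp [hn]
  have key : ∀ w : ℂ, ∃ r : ℝ, (r : ℂ) = (Complex.I * starRingEnd ℂ η) * (w - z * starRingEnd ℂ w) := by
    intro w
    have : starRingEnd ℂ ((Complex.I * starRingEnd ℂ η) * (w - z * starRingEnd ℂ w)) =
        (Complex.I * starRingEnd ℂ η) * (w - z * starRingEnd ℂ w) := by
      rw [← hη]
      simp only [map_mul, map_sub, map_pow, Complex.conj_I, Complex.conj_conj]
      linear_combination Complex.I * (starRingEnd ℂ w * η + starRingEnd ℂ η * w) * hη1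
    obtain ⟨r, hr⟩ := Complex.conj_eq_iff_real.1 this
    exact ⟨r, hr.symm⟩
  obtain ⟨r1, h1⟩ := key p.1
  obtain ⟨r2, h2⟩ := key p.2
  refine ⟨Complex.I * starRingEnd ℂ η, (r1, r2), ?_, h1, h2⟩
  apply mul_ne_zero Complex.I_ne_zero
  exact right_ne_zero_of_mul_eq_one hη1

theorem product_form (d : ℕ) (hd : d ≠ 0) (F : MvPolynomial (Fin 2) ℝ) (p : ℂ × ℂ)
    (hp : p.1 * (cj p).2 ≠ p.2 * (cj p).1) (hF0 : F ≠ 0)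
    (hF : F.map (algebraMap ℝ ℂ) = lin p ^ d + lin (cj p) ^ d) :
    ∃ L : Fin d → ℝ × ℝ, F = ∏ i, rlin (L i) ∧
          ∀ i j, i ≠ j → (L i).1 * (L j).2 ≠ (L i).2 * (L j).1 := by
  have hd0 : 0 < d := Nat.pos_of_ne_zero hd
  obtain ⟨ω, hω⟩ := IsAlgClosed.exists_pow_nat_eq (-1 : ℂ) hd0
  have hω0 : ω ≠ 0 := by rintro rfl; simp [hd] at hω
  have hζ := Complex.isPrimitiveRoot_exp d hd
  set ζ := Complex.exp (2 * Real.pi * Complex.I / d) with hζdef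
  have hζC : IsPrimitiveRoot (C (σ := Fin 2) ζ) d := hζ.map_of_injective (C_injective _ _)
  have hprod := X_pow_sub_C_eq_prod hζC (α := C ω * lin (cj p)) hd0 rfl
  have hprod2 := congrArg (Polynomial.eval (lin p)) hprod
  simp only [Polynomial.eval_sub, Polynomial.eval_pow, Polynomial.eval_X, Polynomial.eval_C,
    Polynomial.eval_prod] at hprod2
  have hz : ∀ i : Fin d, ‖ζ ^ (i : ℕ) * ω‖ = 1 := by
    intro i
    have : ‖ζ ^ (i : ℕ) * ω‖ ^ d = 1 := by
      rw [← norm_pow, mul_pow, hω, ← pow_mul, mul_comm (i : ℕ), pow_mul, hζ.pow_eq_one]; simp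
    exact (pow_eq_one_iff_of_nonneg (norm_nonneg _) hd).1 this
  choose c L hc hL1 hL2 using fun i => real_factor p _ (hz i)
  have hfac : ∀ i : Fin d, lin p - C ζ ^ (i : ℕ) * (C ω * lin (cj p)) =
      C (c i)⁻¹ * (rlin (L i)).map (algebraMap ℝ ℂ) := by
    intro i
    rw [map_rlin, hL1, hL2]
    rw [show lin (c i * (p.1 - ζ ^ (i : ℕ) * ω * (cj p).1), c i * (p.2 - ζ ^ (i : ℕ) * ω * (cj p).2))
      = C (c i) * lin (p.1 - ζ ^ (i : ℕ) * ω * (cj p).1, p.2 - ζ ^ (i : ℕ) * ω * (cj p).2) from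
        lin_smul _ (_, _)]
    rw [← mul_assoc (C (c i)⁻¹), ← C_mul, inv_mul_cancel₀ (hc i), C_1, one_mul]
    simp [lin]; ring
  rw [mul_pow, ← C_pow, hω, C_neg, C_1, neg_one_mul, sub_neg_eq_add, ← hF, Finset.prod_range] at hprod2
  simp only [hfac] at hprod2
  rw [Finset.prod_mul_distrib, ← map_prod, ← map_prod] at hprod2
  set κ := ∏ i, (c i)⁻¹ with hκ
  set P := ∏ i, rlin (L i) with hP
  have hP0 : P ≠ 0 := by
    intro h0
    apply hF0; apply map_inj; rw [hprod2, h0]; simp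
  obtain ⟨m, hm⟩ := ne_zero_iff.1 hP0
  have hcoef := congrArg (coeff m) hprod2
  rw [coeff_C_mul, coeff_map, coeff_map] at hcoef
  have hFP : F = C (coeff m F / coeff m P) * P := by
    apply map_inj
    rw [hprod2, map_mul, map_C]
    congr 2
    rw [map_div₀, hcoef, mul_div_cancel_right₀]
    simpa using hm
  set s := coeff m F / coeff m P with hs
  have hs0 : s ≠ 0 := by
    intro h0; rw [h0] at hFP; apply hF0; rw [hFP]; simp
  let i0 : Fin d := ⟨0, hd0⟩
  let t : Fin d → ℝ := fun i => if i = i0 then s else 1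
  have ht0 : ∀ i, t i ≠ 0 := by
    intro i; simp only [t]; split_ifs
    · exact hs0
    · exact one_ne_zero
  refine ⟨fun i => (t i * (L i).1, t i * (L i).2), ?_, ?_⟩
  · have e : ∀ i, rlin (t i * (L i).1, t i * (L i).2) = C (t i) * rlin (L i) := by
      intro i; simp [rlin]; ring
    simp only [e]
    rw [Finset.prod_mul_distrib, ← map_prod, ← hP]
    have : ∏ i, t i = s := by simp [t]
    rw [this]; exact hFP
  · intro i j hij h0
    have h1 : (L i).1 * (L j).2 = (L i).2 * (L j).1 := by
      apply mul_left_cancel₀ (mul_ne_zero (ht0 i) (ht0 j))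
      simp only at h0
      linear_combination h0
    have h2 : ((L i).1 : ℂ) * (L j).2 = (L i).2 * (L j).1 := by exact_mod_cast h1
    rw [hL1, hL2, hL1, hL2] at h2
    have h3 : (c i * c j * ω * (p.1 * (cj p).2 - p.2 * (cj p).1)) * (ζ ^ (i : ℕ) - ζ ^ (j : ℕ)) = 0 := by
      linear_combination h2
    have h4 := (mul_eq_zero.1 h3).resolve_left
      (mul_ne_zero (mul_ne_zero (mul_ne_zero (hc i) (hc j)) hω0) (sub_ne_zero.2 hp))
    exact hij (Fin.ext (hζ.pow_inj i.2 j.2 (sub_eq_zero.1 h4)))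

theorem not_caseB (d : ℕ) (hd : 4 ≤ d) (F : MvPolynomial (Fin 2) ℝ) (A B : ℝ) (m n : ℝ × ℝ)
    (hF : F = C A * rlin m ^ d + C B * rlin n ^ d)
    (hr : ¬ ∃ t e, F.map (algebraMap ℝ ℂ) = C t * lin e ^ d)
    (L : Fin d → ℝ × ℝ) (hL : F = ∏ i, rlin (L i))
    (hLd : ∀ i j, i ≠ j → (L i).1 * (L j).2 ≠ (L i).2 * (L j).1) : False := by
  have hFm : F.map (algebraMap ℝ ℂ) = C (A : ℂ) * lin ((m.1 : ℂ), (m.2 : ℂ)) ^ d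
      + C (B : ℂ) * lin ((n.1 : ℂ), (n.2 : ℂ)) ^ d := by
    rw [hF]; simp [map_rlin]
  have hA : A ≠ 0 := by
    rintro rfl; apply hr; exact ⟨B, ((n.1 : ℂ), (n.2 : ℂ)), by rw [hFm]; simp⟩
  have hmn : m.1 * n.2 - m.2 * n.1 ≠ 0 := by
    intro h0
    apply hr
    rw [hFm]
    refine par_merge d (by omega) _ _ _ _ ?_
    simp only
    exact_mod_cast sub_eq_zero.1 h0
  let x : Fin d → ℝ := fun i => m.1 * (L i).2 - m.2 * (L i).1
  let y : Fin d → ℝ := fun i => n.1 * (L i).2 - n.2 * (L i).1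
  have hxy : ∀ i, A * x i ^ d = - B * y i ^ d := by
    intro i
    have h1 : eval ![(L i).2, -(L i).1] F = 0 := by
      rw [hL, map_prod]
      apply Finset.prod_eq_zero (Finset.mem_univ i)
      simp [rlin]; ring
    rw [hF] at h1
    simp [rlin] at h1
    simp only [x, y, sub_eq_add_neg]
    linear_combination h1
  have hne : ∀ i j, i ≠ j → x i * y j ≠ x j * y i := by
    intro i j hij h0
    apply hLd i j hij
    apply mul_left_cancel₀ hmn
    simp only [x, y] at h0
    linear_combination h0
  have hneg : ∀ i j, i ≠ j → x i * y j = - (x j * y i) := by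
    intro i j hij
    have : (x i * y j) ^ d = (x j * y i) ^ d := by
      apply mul_left_cancel₀ hA
      rw [mul_pow, mul_pow]
      linear_combination y j ^ d * hxy i - y i ^ d * hxy j
    have h2 : |x i * y j| ^ d = |x j * y i| ^ d := by rw [← abs_pow, ← abs_pow, this]
    have h3 := (pow_left_inj₀ (abs_nonneg _) (abs_nonneg _) (by omega)).1 h2
    exact (abs_eq_abs.1 h3).resolve_left (hne i j hij)
  let i0 : Fin d := ⟨0, by omega⟩
  let i1 : Fin d := ⟨1, by omega⟩
  let i2 : Fin d := ⟨2, by omega⟩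
  have n01 := hneg i0 i1 (by simp [i0, i1])
  have n02 := hneg i0 i2 (by simp [i0, i2])
  have n12 := hneg i1 i2 (by simp [i1, i2])
  have e01 := hne i0 i1 (by simp [i0, i1])
  have e02 := hne i0 i2 (by simp [i0, i2])
  have e12 := hne i1 i2 (by simp [i1, i2])
  have hx1 : x i1 ≠ 0 := by
    intro h; rw [h] at n01 e01; apply e01; linarith
  have hy1 : y i1 ≠ 0 := by
    intro h; rw [h] at n01 e01; apply e01; linarith
  apply e02
  apply mul_left_cancel₀ (mul_ne_zero hx1 hy1)
  linear_combination (x i1 * y i2) * n01 - (x i1 * y i0) * n12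

theorem real_rank_le_of (d r : ℕ) (F : MvPolynomial (Fin 2) ℝ)
    (h : ∃ (a : Fin r → ℝ) (c : Fin r → ℝ × ℝ), F = ∑ i, C (a i) * rlin (c i) ^ d) :
    realWaringRank d F ≤ r := Nat.sInf_le h

theorem rank_le_of (d r : ℕ) (F : MvPolynomial (Fin 2) ℂ)
    (h : ∃ (a : Fin r → ℂ) (c : Fin r → ℂ × ℂ), F = ∑ i, C (a i) * lin (c i) ^ d) :
    waringRank d F ≤ r := Nat.sInf_le h

theorem rank_le_two (d : ℕ) (F : MvPolynomial (Fin 2) ℝ) (A B : ℝ) (m n : ℝ × ℝ)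
    (hF : F = C A * rlin m ^ d + C B * rlin n ^ d) : realWaringRank d F ≤ 2 :=
  real_rank_le_of d 2 F ⟨![A, B], ![m, n], by simp [Fin.sum_univ_two, hF]⟩

theorem real_rank_le_two_of_one (d : ℕ) (hd : 4 ≤ d) (F : MvPolynomial (Fin 2) ℝ) (a : ℂ)
    (l : ℂ × ℂ) (h : F.map (algebraMap ℝ ℂ) = C a * lin l ^ d) : realWaringRank d F ≤ 2 := by
  have h' : F.map (algebraMap ℝ ℂ) = C a * lin l ^ d + C 0 * lin 0 ^ d := by rw [h]; simp
  by_cases hl : l.1 * (cj l).2 = l.2 * (cj l).1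
  · obtain ⟨A, B, m, n, hh⟩ := caseB d F a 0 l 0 h' hl (by simp)
    exact rank_le_two d F A B m n hh
  · by_cases ha : a = 0
    · have : F = 0 := by apply map_inj; rw [h, ha]; simp
      exact rank_le_two d F 0 0 0 0 (by simp [this])
    · exfalso
      have h2 : F.map (algebraMap ℝ ℂ) = C a * lin l ^ d + C 0 * lin (cj l) ^ d := by rw [h]; simp
      rcases par_dichotomy d hd F a 0 l (cj l) h2 ha hl with h3 | h3
      · exact hl h3
      · have h4 := congrArg (MvPolynomial.map (starRingEnd ℂ)) h
        rw [map_conj_map] at h4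
        simp only [map_mul, map_pow, map_C, map_lin_conj] at h4
        refine ha (kill (ι := Bool) (fun b => if b then l else cj l)
          (fun _ => ((cj l).2, -(cj l).1)) d (fun b => if b then a else -starRingEnd ℂ a)
          (by simp; linear_combination h4 - h) true ?_ ?_)
        · intro i hi
          refine ⟨0, by omega, ?_⟩
          cases i
          · simp; ring
          · simp at hi
        · intro j _ h0
          apply hl
          simp only [if_true] at h0
          linear_combination h0

theorem dichotomy (d : ℕ) (hd : 4 ≤ d) (F : MvPolynomial (Fin 2) ℝ)
    (h2 : waringRank d (F.map (algebraMap ℝ ℂ)) = 2) :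
    (¬ ∃ t e, F.map (algebraMap ℝ ℂ) = C t * lin e ^ d) ∧ F ≠ 0 ∧
    ((∃ (A B : ℝ) (m n : ℝ × ℝ), F = C A * rlin m ^ d + C B * rlin n ^ d) ∨
     ∃ p : ℂ × ℂ, p.1 * (cj p).2 ≠ p.2 * (cj p).1 ∧
      F.map (algebraMap ℝ ℂ) = lin p ^ d + lin (cj p) ^ d) := by
  have hno : ¬ ∃ t e, F.map (algebraMap ℝ ℂ) = C t * lin e ^ d := by
    rintro ⟨t, e, h⟩
    have := rank_le_of d 1 (F.map (algebraMap ℝ ℂ)) ⟨fun _ => t, fun _ => e, by simp [h]⟩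
    omega
  have hF0 : F ≠ 0 := by
    rintro rfl; apply hno; exact ⟨0, 0, by simp⟩
  refine ⟨hno, hF0, ?_⟩
  have hmem := Nat.sInf_mem (Nat.nonempty_of_pos_sInf
    (show 0 < waringRank d (F.map (algebraMap ℝ ℂ)) by omega))
  change waringRank d (F.map (algebraMap ℝ ℂ)) ∈ _ at hmem
  rw [h2] at hmem
  obtain ⟨a, c, h⟩ := hmem
  rw [Fin.sum_univ_two] at h
  generalize a 0 = a0 at h
  generalize a 1 = b at h
  generalize c 0 = l at h
  generalize c 1 = k at h
  have ha : a0 ≠ 0 := by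
    rintro rfl; apply hno; exact ⟨b, k, by rw [h]; simp⟩
  have hb : b ≠ 0 := by
    rintro rfl; apply hno; exact ⟨a0, l, by rw [h]; simp⟩
  have hlk : l.1 * k.2 ≠ l.2 * k.1 := by
    intro h0; apply hno; rw [h]; exact par_merge d (by omega) _ _ _ _ h0
  rcases par_dichotomy d hd F a0 b l k h ha hlk with h3 | h3
  · rcases par_dichotomy d hd F b a0 k l (by rw [h]; ring) hb
      (by intro h0; apply hlk; linear_combination -h0) with h4 | h4
    · exact Or.inl (caseB d F a0 b l k h h3 h4)
    · refine Or.inr (caseA d (by omega) F hF0 b a0 k l (by rw [h]; ring) ?_ h4)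
      intro h0; apply hlk; linear_combination -h0
  · exact Or.inr (caseA d (by omega) F hF0 a0 b l k h hlk h3)

theorem real_rank_le_d (d : ℕ) (hd : 4 ≤ d) (F : MvPolynomial (Fin 2) ℝ)
    (hF : F.IsHomogeneous d) :
    ∃ (a : Fin d → ℝ) (c : Fin d → ℝ × ℝ), F = ∑ i, C (a i) * rlin (c i) ^ d := by
  obtain ⟨n, rfl⟩ : ∃ n, d = n + 1 := ⟨d - 1, by omega⟩
  exact real_rank_le n F hF

theorem maximal_real_complex_rank_gap (d : ℕ) (hd : 4 ≤ d)
    (F : MvPolynomial (Fin 2) ℝ) (hF : F.IsHomogeneous d) :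
    (realWaringRank d F - waringRank d (F.map (algebraMap ℝ ℂ)) = d - 2 ↔
      (waringRank d (F.map (algebraMap ℝ ℂ)) = 2 ∧ realWaringRank d F = d)) ∧
    ((waringRank d (F.map (algebraMap ℝ ℂ)) = 2 ∧ realWaringRank d F = d) ↔
      (waringRank d (F.map (algebraMap ℝ ℂ)) = 2 ∧
        ∃ L : Fin d → ℝ × ℝ, F = ∏ i, rlin (L i) ∧
          ∀ i j, i ≠ j → (L i).1 * (L j).2 ≠ (L i).2 * (L j).1)) := by
  have hle := real_rank_le_d d hd F hF
  have hle' := real_rank_le_of d d F hle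
  refine ⟨⟨fun h => ?_, fun h => ?_⟩, ⟨fun h => ⟨h.1, ?_⟩, fun h => ⟨h.1, ?_⟩⟩⟩
  · have hmem := Nat.sInf_mem (s := {r | ∃ (a : Fin r → ℂ) (c : Fin r → ℂ × ℂ),
        F.map (algebraMap ℝ ℂ) = ∑ i, C (a i) * lin (c i) ^ d}) (by
      obtain ⟨a, c, h⟩ := hle
      refine ⟨d, fun i => a i, fun i => ((c i).1, (c i).2), ?_⟩
      conv_lhs => rw [h]
      simp [map_rlin])
    change waringRank d (F.map (algebraMap ℝ ℂ)) ∈ _ at hmem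
    generalize hw : waringRank d (F.map (algebraMap ℝ ℂ)) = w at hmem h
    obtain ⟨a, c, hac⟩ := hmem
    have hw2 : w ≤ 2 := by omega
    interval_cases w
    · exfalso
      have := real_rank_le_two_of_one d hd F 0 0 (by rw [hac]; simp)
      have h0 : F = 0 := by apply map_inj; rw [hac]; simp
      have := real_rank_le_of d 0 F ⟨fun _ => 0, fun _ => 0, by simp [h0]⟩
      omega
    · exfalso
      have := real_rank_le_two_of_one d hd F (a 0) (c 0) (by rw [hac]; simp)
      omega
    · exact ⟨rfl, by omega⟩
  · rw [h.1, h.2]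
  · obtain ⟨_, hF0, h1 | ⟨p, hp, h1⟩⟩ := dichotomy d hd F h.1
    · obtain ⟨A, B, m, n, hh⟩ := h1
      have := rank_le_two d F A B m n hh
      omega
    · exact product_form d (by omega) F p hp hF0 h1
  · obtain ⟨hno, hF0, h1 | ⟨p, hp, h1⟩⟩ := dichotomy d hd F h.1
    · obtain ⟨A, B, m, n, hh⟩ := h1
      obtain ⟨L, hL, hLd⟩ := h.2
      exact (not_caseB d hd F A B m n hh hno L hL hLd).elim
    · refine le_antisymm hle' ?_
      have hmem := Nat.sInf_mem (s := {r | ∃ (a : Fin r → ℝ) (c : Fin r → ℝ × ℝ),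
        F = ∑ i, C (a i) * rlin (c i) ^ d}) ⟨d, hle⟩
      obtain ⟨a, c, hac⟩ := hmem
      exact lower_bound d _ (by omega) F p hp h1 a c hac
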